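/- arXiv:0912.3680 — 2 statements merged into one kernel-verified Lean document; each statement's English description precedes it below -/
import Mathlib

section
/- Let n ≥ 3 and R = ℝ[X_0,…,X_{n−1}]. Then the polynomials √2·X_0 + 2X_1 + 2X_2 and X_1·(√2·X_0 + X_1) − (X_1 + X_2)² − √2·X_0·(X_1 + X_2) are each fixed by both α_0 and α_1∘α_0∘α_1, i.e., they belong to R^{α_0} ∩ R^{α_1∘α_0∘α_1}. Moreover X_2² = (X_1·(√2·X_0 + X_1) − (X_1 + X_2)² − √2·X_0·(X_1 + X_2)) + (√2·X_0 + 2X_1 + 2X_2)·X_2. -/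
/-!
Write `p = √2·X_0 + 2X_1 + 2X_2` and let `q` be the quadratic polynomial of the theorem. Expanding
gives `q = X_2² - p·X_2 = -X_2·(p - X_2)`, which is the last claim. The linear form `p` is fixed by
both `α_0` and `α_1`, hence by `β = α_1∘α_0∘α_1`. The variable `X_2` is fixed by `α_0`, so `q` is
too, while `β` sends `X_2` to `p - X_2`: it swaps the two factors `X_2` and `p - X_2`, so it also
fixes `q`.
-/

open MvPolynomial

/-- The `ℝ`-algebra endomorphism `α_j` of `R = ℝ[X_0, …, X_{n-1}]` of type
`B_n`: it sends `X_j ↦ -X_j`; `X_1 ↦ X_1 + √2·X_0` if `j = 0`;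
`X_0 ↦ X_0 + √2·X_1` if `j = 1`; `X_i ↦ X_i + X_j` for `|i - j| = 1`
(except in the two cases above), and fixes the other variables.
(It is in fact an automorphism, being an involution.) -/
noncomputable def alpha (n : ℕ) (j : Fin n) :
    MvPolynomial (Fin n) ℝ →ₐ[ℝ] MvPolynomial (Fin n) ℝ :=
  MvPolynomial.aeval fun i =>
    if i = j then -(X j : MvPolynomial (Fin n) ℝ)
    else if ((j : ℕ) = 0 ∧ (i : ℕ) = 1) ∨ ((j : ℕ) = 1 ∧ (i : ℕ) = 0) then
      X i + Real.sqrt 2 • X j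
    else if (i : ℕ) = (j : ℕ) + 1 ∨ (i : ℕ) + 1 = (j : ℕ) then X i + X j
    else X i

/-- For `n ≥ 3` and `R = ℝ[X_0, …, X_{n-1}]`, the polynomials
`√2·X_0 + 2X_1 + 2X_2` and
`X_1·(√2·X_0 + X_1) − (X_1 + X_2)² − √2·X_0·(X_1 + X_2)` are fixed by both
`α_0` and `α_1∘α_0∘α_1`, i.e. they lie in `R^{α_0} ∩ R^{α_1∘α_0∘α_1}`;
moreover
`X_2² = (X_1·(√2·X_0 + X_1) − (X_1 + X_2)² − √2·X_0·(X_1 + X_2))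
        + (√2·X_0 + 2X_1 + 2X_2)·X_2`. -/
theorem invariant_polynomials (n : ℕ) (hn : 3 ≤ n) :
    let X0 : MvPolynomial (Fin n) ℝ := X ⟨0, by omega⟩
    let X1 : MvPolynomial (Fin n) ℝ := X ⟨1, by omega⟩
    let X2 : MvPolynomial (Fin n) ℝ := X ⟨2, by omega⟩
    let p : MvPolynomial (Fin n) ℝ := Real.sqrt 2 • X0 + 2 * X1 + 2 * X2
    let q : MvPolynomial (Fin n) ℝ :=
      X1 * (Real.sqrt 2 • X0 + X1) - (X1 + X2) ^ 2 - Real.sqrt 2 • (X0 * (X1 + X2))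
    alpha n ⟨0, by omega⟩ p = p ∧
    ((alpha n ⟨1, by omega⟩).comp ((alpha n ⟨0, by omega⟩).comp (alpha n ⟨1, by omega⟩))) p = p ∧
    alpha n ⟨0, by omega⟩ q = q ∧
    ((alpha n ⟨1, by omega⟩).comp ((alpha n ⟨0, by omega⟩).comp (alpha n ⟨1, by omega⟩))) q = q ∧
    X2 ^ 2 = q + p * X2 := by
  intro X0 X1 X2 p q
  have a00 : alpha n ⟨0, by omega⟩ X0 = -X0 := by simp [alpha, X0]
  have a01 : alpha n ⟨0, by omega⟩ X1 = X1 + Real.sqrt 2 • X0 := by simp [alpha, X0, X1]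
  have a02 : alpha n ⟨0, by omega⟩ X2 = X2 := by simp [alpha, X2]
  have a10 : alpha n ⟨1, by omega⟩ X0 = X0 + Real.sqrt 2 • X1 := by simp [alpha, X0, X1]
  have a11 : alpha n ⟨1, by omega⟩ X1 = -X1 := by simp [alpha, X1]
  have a12 : alpha n ⟨1, by omega⟩ X2 = X2 + X1 := by simp [alpha, X1, X2]
  have sq2 : Real.sqrt 2 • Real.sqrt 2 • X1 = 2 * X1 := by
    rw [smul_smul, Real.mul_self_sqrt (by norm_num), ofNat_smul_eq_nsmul, nsmul_eq_mul]
    norm_num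
  have p0 : alpha n ⟨0, by omega⟩ p = p := by
    simp only [p, map_add, map_mul, map_smul, map_ofNat, a00, a01, a02, smul_neg]
    ring
  have p1 : alpha n ⟨1, by omega⟩ p = p := by
    simp only [p, map_add, map_mul, map_smul, map_ofNat, a10, a11, a12, smul_add, sq2]
    ring
  have pβ : ((alpha n ⟨1, by omega⟩).comp
      ((alpha n ⟨0, by omega⟩).comp (alpha n ⟨1, by omega⟩))) p = p := by
    simp only [AlgHom.comp_apply, p0, p1]
  have Xβ : ((alpha n ⟨1, by omega⟩).comp
      ((alpha n ⟨0, by omega⟩).comp (alpha n ⟨1, by omega⟩))) X2 = p - X2 := by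
    simp only [p, AlgHom.comp_apply, map_add, map_smul, a01, a02, a10, a11, a12, smul_add, sq2]
    ring
  have hq : q = X2 ^ 2 - p * X2 := by
    simp only [q, p, smul_eq_C_mul]
    ring
  refine ⟨p0, pβ, ?_, ?_, ?_⟩
  · rw [hq, map_sub, map_pow, map_mul, p0, a02]
  · rw [hq, map_sub, map_pow, map_mul, pβ, Xβ]
    ring
  · rw [hq]
    ring
end

section
/- For every n ≥ 2 there is a well-defined group homomorphism from the generalized braid group B_{B_n} of type B_n to the braid group B_{2n} on 2n strands (with generators σ_i indexed by i ∈ {−n+1,…,n−1}) determined by s_0 ↦ σ_0 and s_i ↦ σ_{−i} σ_i for 1 ≤ i ≤ n−1. Equivalently, the elements σ_0 and σ_{−i}σ_i of B_{2n} satisfy the defining relations of B_{B_n}; in particular σ_{−i} and σ_i commute in B_{2n}. -/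
/-!
The elements `σ_0` and `σ_{-i} σ_i` of `B_{2n}` satisfy the type `B_n` relations, so the universal
property of the presentation gives the homomorphism.  Since `σ_{-i}` and `σ_j` commute for
`i, j ≥ 1`, the commutation and length-three relations split into a relation among the `σ_{-i}`
and one among the `σ_i` (`braid_mul`).  The length-four relation reduces to three elements
`a = σ_0`, `b = σ_{-1}`, `c = σ_1` with `bc = cb`, `aba = bab`, `aca = cac` (`four_braid_mul`).
-/

/-- The Artin braid relations for the braid group with `m` generators
`σ` indexed by `Fin m`.  For the braid group `B_{2n}` with its generators
re-indexed by `{-n+1, …, n-1}`, the generator with shifted index `k`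
corresponds to the Fin value `k + (n-1)` in `Fin (2n-1)`. -/
def BraidRels (m : ℕ) : Set (FreeGroup (Fin m)) :=
  { r |
    (∃ i j : Fin m, (i : ℕ) + 1 < (j : ℕ) ∧
      r = FreeGroup.of i * FreeGroup.of j * (FreeGroup.of j * FreeGroup.of i)⁻¹) ∨
    (∃ i j : Fin m, (j : ℕ) = (i : ℕ) + 1 ∧
      r = FreeGroup.of i * FreeGroup.of j * FreeGroup.of i *
        (FreeGroup.of j * FreeGroup.of i * FreeGroup.of j)⁻¹) }

/-- The braid group on `m + 1` strands (with `m` generators). -/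
abbrev Braid (m : ℕ) := PresentedGroup (BraidRels m)

/-- The generator `σ` of the braid group. -/
def Braid.sg {m : ℕ} (i : Fin m) : Braid m := PresentedGroup.of i

/-- The defining relations of the generalized braid group `B_{B_n}` of type
`B_n`, with generators `s_0, …, s_{n-1}` indexed by `Fin n`. -/
def BBRels (n : ℕ) : Set (FreeGroup (Fin n)) :=
  { r |
    (∃ i j : Fin n, (i : ℕ) + 1 < (j : ℕ) ∧
      r = FreeGroup.of i * FreeGroup.of j * (FreeGroup.of j * FreeGroup.of i)⁻¹) ∨
    (∃ i j : Fin n, 1 ≤ (i : ℕ) ∧ (j : ℕ) = (i : ℕ) + 1 ∧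
      r = FreeGroup.of i * FreeGroup.of j * FreeGroup.of i *
        (FreeGroup.of j * FreeGroup.of i * FreeGroup.of j)⁻¹) ∨
    (∃ i j : Fin n, (i : ℕ) = 0 ∧ (j : ℕ) = 1 ∧
      r = FreeGroup.of i * FreeGroup.of j * FreeGroup.of i * FreeGroup.of j *
        (FreeGroup.of j * FreeGroup.of i * FreeGroup.of j * FreeGroup.of i)⁻¹) }

/-- The generalized braid group `B_{B_n}` of type `B_n`. -/
abbrev BraidB (n : ℕ) := PresentedGroup (BBRels n)

/-- The generator `s_i` of `B_{B_n}`. -/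
def BraidB.s {n : ℕ} (i : Fin n) : BraidB n := PresentedGroup.of i

theorem Braid.sg_commute {m : ℕ} (i j : Fin m) (h : (i : ℕ) + 1 < j) :
    Commute (Braid.sg i) (Braid.sg j) :=
  PresentedGroup.mk_eq_mk_of_mul_inv_mem (rels := BraidRels m)
    (x := FreeGroup.of i * FreeGroup.of j) (y := FreeGroup.of j * FreeGroup.of i)
    (Or.inl ⟨i, j, h, rfl⟩)

theorem Braid.sg_braid {m : ℕ} (i j : Fin m) (h : (j : ℕ) = i + 1) :
    Braid.sg i * Braid.sg j * Braid.sg i = Braid.sg j * Braid.sg i * Braid.sg j :=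
  PresentedGroup.mk_eq_mk_of_mul_inv_mem (rels := BraidRels m)
    (x := FreeGroup.of i * FreeGroup.of j * FreeGroup.of i)
    (y := FreeGroup.of j * FreeGroup.of i * FreeGroup.of j)
    (Or.inr ⟨i, j, h, rfl⟩)

/-- Two length-three braid relations between mutually commuting pairs `(x, y)` and `(z, w)`
multiply to a braid relation between `x * z` and `y * w`. -/
theorem braid_mul {G : Type*} [Group G] {x y z w : G}
    (hx : Commute x z) (hxy : Commute x w) (hyx : Commute y z) (hy : Commute y w)
    (h : x * y * x = y * x * y) (hzw : z * w * z = w * z * w) :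
    x * z * (y * w) * (x * z) = y * w * (x * z) * (y * w) := by
  rw [hyx.symm.mul_mul_mul_comm, (hx.symm.mul_left hxy.symm).mul_mul_mul_comm,
    hxy.symm.mul_mul_mul_comm, (hy.symm.mul_left hyx.symm).mul_mul_mul_comm, h, hzw]

/-- If `b`, `c` commute and each satisfies the length-three braid relation with `a`, then `a` and
`b * c` satisfy the length-four one. -/
theorem four_braid_mul {G : Type*} [Group G] {a b c : G} (hbc : Commute b c)
    (hb : b * a * b = a * b * a) (hc : a * c * a = c * a * c) :
    a * (b * c) * a * (b * c) = b * c * a * (b * c) * a :=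
  calc a * (b * c) * a * (b * c) = a * b * (c * a * c) * b := by
        conv_lhs => enter [2]; rw [hbc.eq]
        group
    _ = (a * b * a) * c * (a * b) := by rw [← hc]; group
    _ = b * a * (b * c) * a * b := by rw [← hb]; group
    _ = b * a * c * (b * a * b) := by rw [hbc.eq]; group
    _ = b * (a * c * a) * b * a := by rw [hb]; group
    _ = b * c * a * (c * b) * a := by rw [hc]; group
    _ = b * c * a * (b * c) * a := by rw [hbc.eq]

/-- The images of the generators: `s_0 ↦ σ_0` and `s_i ↦ σ_{-i} σ_i` for `i ≥ 1`, where `σ_k` has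
position `n - 1 + k` in `Fin (2 * n - 1)`. -/
def BraidB.image (n : ℕ) (i : Fin n) : Braid (2 * n - 1) :=
  if (i : ℕ) = 0 then Braid.sg ⟨n - 1, by have := i.isLt; omega⟩
  else Braid.sg ⟨n - 1 - i, by omega⟩ * Braid.sg ⟨n - 1 + i, by omega⟩

theorem BraidB.image_rels (n : ℕ) :
    ∀ r ∈ BBRels n, FreeGroup.lift (BraidB.image n) r = 1 := by
  rintro r (⟨i, j, hij, rfl⟩ | ⟨i, j, hi, hij, rfl⟩ | ⟨i, j, hi, hj, rfl⟩) <;>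
    simp only [map_mul, map_inv, FreeGroup.lift_apply_of, mul_inv_eq_one]
  · change Commute _ _
    have hj : (j : ℕ) ≠ 0 := by omega
    by_cases hi : (i : ℕ) = 0
    · simp only [BraidB.image, hi, hj, if_true, if_false]
      refine Commute.mul_right (Commute.symm ?_) ?_ <;> apply Braid.sg_commute <;>
        simp only <;> omega
    · simp only [BraidB.image, hi, hj, if_false]
      refine Commute.mul_left (Commute.mul_right (Commute.symm ?_) ?_)
        (Commute.mul_right (Commute.symm ?_) ?_) <;> apply Braid.sg_commute <;>
        simp only <;> omega
  · have hi0 : (i : ℕ) ≠ 0 := by omega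
    have hj0 : (j : ℕ) ≠ 0 := by omega
    simp only [BraidB.image, hi0, hj0, if_false]
    apply braid_mul
    · apply Braid.sg_commute; simp only; omega
    · apply Braid.sg_commute; simp only; omega
    · apply Braid.sg_commute; simp only; omega
    · apply Braid.sg_commute; simp only; omega
    · symm; apply Braid.sg_braid; simp only; omega
    · apply Braid.sg_braid; simp only; omega
  · have hj0 : (j : ℕ) ≠ 0 := by omega
    simp only [BraidB.image, hi, hj0, if_true, if_false]
    apply four_braid_mul
    · apply Braid.sg_commute; simp only; omega
    · apply Braid.sg_braid; simp only; omega
    · apply Braid.sg_braid; simp only; omega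

/-- For every `n ≥ 2` there is a (well-defined) group homomorphism
`B_{B_n} →* B_{2n}` with `s_0 ↦ σ_0` and `s_i ↦ σ_{-i} σ_i` for
`1 ≤ i ≤ n-1`; equivalently, the elements `σ_0` and `σ_{-i}σ_i` of `B_{2n}`
satisfy the defining relations of `B_{B_n}`.  In particular `σ_{-i}` and
`σ_i` commute in `B_{2n}`.  Here `B_{2n} = Braid (2n-1)`, the generator with
shifted index `k ∈ {-n+1, …, n-1}` being the Fin value `k + (n-1)`. -/
theorem BraidB_to_Braid_hom (n : ℕ) (hn : 2 ≤ n) :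
    ∃ J : BraidB n →* Braid (2 * n - 1),
      J (BraidB.s ⟨0, by omega⟩) = Braid.sg ⟨n - 1, by omega⟩ ∧
      (∀ i : ℕ, ∀ _hi1 : 1 ≤ i, ∀ _hi2 : i ≤ n - 1,
        J (BraidB.s ⟨i, by omega⟩) =
          Braid.sg ⟨n - 1 - i, by omega⟩ * Braid.sg ⟨n - 1 + i, by omega⟩ ∧
        Braid.sg (m := 2 * n - 1) ⟨n - 1 - i, by omega⟩ * Braid.sg ⟨n - 1 + i, by omega⟩ =
          Braid.sg (m := 2 * n - 1) ⟨n - 1 + i, by omega⟩ *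
            Braid.sg ⟨n - 1 - i, by omega⟩) := by
  refine ⟨PresentedGroup.toGroup (BraidB.image_rels n), ?_, fun i hi1 hi2 => ⟨?_, ?_⟩⟩
  · simp [BraidB.s, PresentedGroup.toGroup.of, BraidB.image]
  · have hi : i ≠ 0 := by omega
    simp [BraidB.s, PresentedGroup.toGroup.of, BraidB.image, hi]
  · apply Braid.sg_commute
    simp only
    omega
end
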